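/- arXiv:1004.3441 — 2 statements merged into one kernel-verified Lean document; each statement's English description precedes it below -/
import Mathlib

section
/- Let g : M → M be a Borel measurable map of a compact metric space M, let μ be a g-invariant Borel probability measure on M, and let ν be a Borel measure on M (not necessarily g-invariant) such that μ is absolutely continuous with respect to ν. Then h_μ(g) ≥ sup_{δ > 0} ∫_M h_ν(g, δ, x) dμ(x). -/
/-!
The proof bounds the local entropy of `ν` by the conditional entropies of a partition, in the
spirit of the Algoet–Cover proof of the Shannon–McMillan–Breiman theorem.

Fix `δ > 0` and a finite measurable partition `P` with atoms of diameter at most `δ`, coded by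
`idx : X → ℕ`. The Bowen ball `B_n(g, δ, x)` contains the atom `P^{n+1}(x)` of the refined
partition, so it suffices to bound `ν (P^n(x))` from below. Let `q` be the `k`-step Markov weight
on words built from the conditional `μ`-probabilities of a letter given the next `k` letters
(`markov`). These weights sum to at most `1` over the words of length `n` (`tsum_markov_le_one`;
this uses the invariance of `μ`), so the atoms with `ν (A) < e^{-nε} q(A)` have total `ν`-measure
at most `e^{-nε}`. By Borel–Cantelli and `μ ≪ ν`, `μ`-almost every `x` satisfies
`ν (P^n(x)) ≥ e^{-nε} q(P^n(x))` for all large `n` (`ae_eventually_markov_le`); no finiteness of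
`ν` is needed.

Up to a bounded error, `-log q(P^n(x))` is the Birkhoff sum of the conditional information
`condInfo` (`exp_le_markov`), whose integral is `H(P^{k+1}) - H(P^k)` (`lintegral_condInfo`). The
inequality `∫ limsup S_n φ / n ≤ ∫ φ` for bounded `φ` (`lintegral_limsup_birkhoffSum_le`), proved by
cutting orbits into blocks on which the upper average is almost attained, then bounds the integral
of the local entropy by `H(P^{k+1}) - H(P^k) + ε`. Finally some `k` makes this increment at most
`liminf H(P^n) / n + ε` (`exists_increment_le`).
-/

open MeasureTheory Filter Manifold Topology ENNReal Set

noncomputable section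

/-! ### Kolmogorov–Sinai metric entropy -/

/-- A finite measurable partition of a measurable space, indexed by `ℕ`
(all but finitely many pieces are empty). -/
def IsFinitePartition {X : Type*} [MeasurableSpace X] (P : ℕ → Set X) : Prop :=
  (∀ i, MeasurableSet (P i)) ∧ Pairwise (Function.onFun Disjoint P) ∧
    (⋃ i, P i) = Set.univ ∧ ∃ N, ∀ i ≥ N, P i = ∅

/-- Shannon entropy `∑ -μ(Pᵢ) log μ(Pᵢ)` of a countable family of sets. -/
def partitionEntropy {X : Type*} [MeasurableSpace X] {ι : Type*} [Countable ι]
    (μ : Measure X) (P : ι → Set X) : ℝ≥0∞ :=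
  ∑' i, ENNReal.ofReal (Real.negMulLog (μ (P i)).toReal)

/-- The dynamical refinement `P ∨ f⁻¹P ∨ ⋯ ∨ f⁻⁽ⁿ⁻¹⁾P` of a partition. -/
def dynRefinement {X : Type*} (f : X → X) (P : ℕ → Set X) (n : ℕ) :
    (Fin n → ℕ) → Set X :=
  fun s => ⋂ j : Fin n, f^[(j : ℕ)] ⁻¹' P (s j)

/-- Entropy of the transformation `f` relative to the partition `P`:
the limit (= liminf, by subadditivity) of `H(P ∨ ⋯ ∨ f⁻⁽ⁿ⁻¹⁾P)/n`. -/
def partitionDynEntropy {X : Type*} [MeasurableSpace X] (μ : Measure X) (f : X → X)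
    (P : ℕ → Set X) : ℝ≥0∞ :=
  Filter.atTop.liminf fun n => partitionEntropy μ (dynRefinement f P n) / (n : ℝ≥0∞)

/-- The Kolmogorov–Sinai (metric) entropy of `f` with respect to `μ`:
the supremum over all finite measurable partitions. -/
def metricEntropy {X : Type*} [MeasurableSpace X] (μ : Measure X) (f : X → X) : ℝ≥0∞ :=
  ⨆ (P : ℕ → Set X) (_ : IsFinitePartition P), partitionDynEntropy μ f P

/-- The Bowen ball `B_n(g, δ, x) = {y : d(gʲx, gʲy) ≤ δ for 0 ≤ j ≤ n}`. -/
def bowenBall {X : Type*} [PseudoMetricSpace X] (g : X → X) (δ : ℝ) (x : X) (n : ℕ) :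
    Set X :=
  {y | ∀ j : ℕ, j ≤ n → dist (g^[j] x) (g^[j] y) ≤ δ}

/-- The local (Brin–Katok style) entropy
`h_ν(g, δ, x) = limsup_{n→∞} (1/n)(− log ν(B_n(g, δ, x)))` of a (not necessarily
invariant) measure `ν`, with value `∞` when the Bowen balls have measure zero
(and truncated at `0`, which is harmless since it is compared with a non-negative
entropy). -/
def localEntropy {X : Type*} [PseudoMetricSpace X] [MeasurableSpace X]
    (ν : Measure X) (g : X → X) (δ : ℝ) (x : X) : ℝ≥0∞ :=
  Filter.atTop.limsup fun n : ℕ =>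
    if ν (bowenBall g δ x n) = 0 then ⊤
    else ENNReal.ofReal (-Real.log ((ν (bowenBall g δ x n)).toReal) / n)

/-! ### An ergodic inequality for upper Birkhoff averages -/

/-- In `ℝ≥0∞`, adding a sequence with limit `c` raises the `limsup` by at most `c`. -/
lemma limsup_add_le_of_tendsto {u v : ℕ → ℝ≥0∞} {c : ℝ≥0∞} (hv : Tendsto v atTop (𝓝 c)) :
    limsup (fun n => u n + v n) atTop ≤ limsup u atTop + c := by
  by_cases hc : c = ⊤
  · simp [hc]
  by_cases hu : limsup u atTop = ⊤
  · simp [hu]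
  refine ENNReal.le_of_forall_pos_le_add fun ε hε _ => ?_
  have hε2 : (ε : ℝ≥0∞) / 2 ≠ 0 := by simpa using hε.ne'
  refine limsup_le_of_le (by isBoundedDefault) ?_
  filter_upwards [hv.eventually (Iio_mem_nhds (ENNReal.lt_add_right hc hε2)),
    eventually_lt_of_limsup_lt (ENNReal.lt_add_right hu hε2)] with n h1 h2
  calc u n + v n ≤ (limsup u atTop + ε / 2) + (c + ε / 2) := add_le_add h2.le (le_of_lt h1)
    _ = limsup u atTop + c + ε := by
        rw [add_add_add_comm, ENNReal.add_halves]

/-- Maximal-type estimate behind the ergodic theorem. If from every point the Birkhoff sum of `f`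
over some time `n ≤ M` dominates `n * ψ`, and `ψ ≤ C` does not decrease along orbits, then
concatenating such blocks gives `L * ψ ≤ S_L f` for every `L`, up to a last block of cost `M * C`. -/
lemma le_birkhoffSum_of_blocks {X : Type*} (g : X → X) (f ψ : X → ℝ≥0∞) (C : ℝ≥0∞) (M : ℕ)
    (hψC : ∀ x, ψ x ≤ C) (hψg : ∀ x, ψ x ≤ ψ (g x))
    (hb : ∀ x, ∃ n, 1 ≤ n ∧ n ≤ M ∧ (n : ℝ≥0∞) * ψ x ≤ birkhoffSum g f n x) (L : ℕ) (x : X) :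
    (L : ℝ≥0∞) * ψ x ≤ birkhoffSum g f L x + M * C := by
  have hψn : ∀ (n : ℕ) (x : X), ψ x ≤ ψ (g^[n] x) := by
    intro n
    induction n with
    | zero => intro x; simp
    | succ n ih => intro x; rw [Function.iterate_succ_apply]; exact (hψg x).trans (ih _)
  induction L using Nat.strong_induction_on generalizing x with
  | _ L ih =>
    by_cases hL : L ≤ M
    · refine le_trans ?_ le_add_self
      gcongr
      exact hψC x
    obtain ⟨n, h1, h2, h3⟩ := hb x
    obtain ⟨m, rfl⟩ : ∃ m, L = n + m := ⟨L - n, by omega⟩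
    have := ih m (by omega) (g^[n] x)
    rw [birkhoffSum_add, add_assoc]
    push_cast
    rw [add_mul]
    refine add_le_add h3 (le_trans ?_ this)
    gcongr
    exact hψn n x

lemma lintegral_birkhoffSum {X : Type*} [MeasurableSpace X] {g : X → X} {μ : Measure X}
    (hμ : MeasurePreserving g μ μ) {f : X → ℝ≥0∞} (hf : Measurable f) (n : ℕ) :
    ∫⁻ x, birkhoffSum g f n x ∂μ = n * ∫⁻ x, f x ∂μ := by
  simp only [birkhoffSum]
  rw [lintegral_finsetSum (Finset.range n) (f := fun k x => f (g^[k] x))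
    (fun i _ => hf.comp (hμ.measurable.iterate i))]
  simp [(hμ.iterate _).lintegral_comp hf]

lemma measurable_birkhoffSum {X : Type*} [MeasurableSpace X] {g : X → X}
    (hg : Measurable g) {f : X → ℝ≥0∞} (hf : Measurable f) (n : ℕ) :
    Measurable (birkhoffSum g f n) := by
  unfold birkhoffSum
  exact Finset.measurable_fun_sum _ (fun i _ => hf.comp (hg.iterate i))

/-- If `n * a ≤ n * b + K` for all `n` with `K` finite, then `a ≤ b`. -/
lemma le_of_forall_nat_mul_le {a b K : ℝ≥0∞} (hK : K ≠ ⊤)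
    (h : ∀ n : ℕ, (n : ℝ≥0∞) * a ≤ n * b + K) : a ≤ b := by
  have h1 : Tendsto (fun n : ℕ => b + K / n) atTop (𝓝 (b + 0)) :=
    tendsto_const_nhds.add (ENNReal.Tendsto.const_div ENNReal.tendsto_nat_nhds_top (Or.inr hK) |>.trans (by simp))
  rw [add_zero] at h1
  refine ge_of_tendsto h1 ?_
  filter_upwards [eventually_gt_atTop 0] with n hn
  have hn0 : (n : ℝ≥0∞) ≠ 0 := by exact_mod_cast hn.ne'
  have hnt : (n : ℝ≥0∞) ≠ ⊤ := ENNReal.natCast_ne_top n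
  rw [← ENNReal.mul_le_mul_iff_right hn0 hnt, mul_add, ENNReal.mul_div_cancel hn0 hnt]
  exact h n

/-- The half of Birkhoff's ergodic theorem needed here: for bounded `φ`, the integral of the
upper limit of the Birkhoff averages is at most `∫ φ`. -/
lemma lintegral_limsup_birkhoffSum_le {X : Type*} [MeasurableSpace X] {g : X → X}
    {μ : Measure X} [IsProbabilityMeasure μ] (hμ : MeasurePreserving g μ μ)
    {φ : X → ℝ≥0∞} (hφ : Measurable φ) {C : ℝ≥0∞} (hC : C ≠ ⊤) (hφC : ∀ x, φ x ≤ C) :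
    ∫⁻ x, limsup (fun n : ℕ => birkhoffSum g φ n x / n) atTop ∂μ ≤ ∫⁻ x, φ x ∂μ := by
  set Φ : X → ℝ≥0∞ := fun x => limsup (fun n : ℕ => birkhoffSum g φ n x / n) atTop with hΦ
  have hSm := measurable_birkhoffSum hμ.measurable hφ
  have hΦm : Measurable Φ := Measurable.limsup fun n => (hSm n).div_const _
  have hSC : ∀ n x, birkhoffSum g φ n x ≤ n * C := by
    intro n x
    simpa [birkhoffSum] using Finset.sum_le_card_nsmul (Finset.range n) (fun k => φ (g^[k] x)) C
      (fun k _ => hφC _)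
  have hΦC : ∀ x, Φ x ≤ C := by
    intro x
    refine limsup_le_of_le (by isBoundedDefault) (Eventually.of_forall fun n => ?_)
    exact ENNReal.div_le_of_le_mul (by rw [mul_comm]; exact hSC n x)
  have hΦg : ∀ x, Φ x ≤ Φ (g x) := by
    intro x
    have h0 : Tendsto (fun n : ℕ => C / ((n + 1 : ℕ) : ℝ≥0∞)) atTop (𝓝 0) := by
      have := ENNReal.Tendsto.const_div (a := C) ENNReal.tendsto_nat_nhds_top (Or.inr hC)
      rw [ENNReal.div_top] at this
      exact this.comp (tendsto_add_atTop_nat 1)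
    calc Φ x = limsup (fun n : ℕ => birkhoffSum g φ (n + 1) x / ((n + 1 : ℕ) : ℝ≥0∞)) atTop :=
          (limsup_nat_add (fun n : ℕ => birkhoffSum g φ n x / n) 1).symm
      _ ≤ limsup (fun n : ℕ => birkhoffSum g φ n (g x) / n + C / ((n + 1 : ℕ) : ℝ≥0∞)) atTop := by
          refine limsup_le_limsup ?_
          filter_upwards with n
          rw [birkhoffSum_succ', ENNReal.add_div, add_comm]
          gcongr
          · exact Nat.le_succ n
          · exact hφC x
      _ ≤ Φ (g x) + 0 := limsup_add_le_of_tendsto h0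
      _ = Φ (g x) := add_zero _
  refine ENNReal.le_of_forall_pos_le_add fun ε hε _ => ?_
  have hε' : (ε : ℝ≥0∞) ≠ 0 := by exact_mod_cast hε.ne'
  -- `ψ = Φ - ε` (truncated at `0`) is reached by some Birkhoff average at every point.
  set ψ : X → ℝ≥0∞ := fun x => Φ x - ε with hψ
  have hψm : Measurable ψ := hΦm.sub_const _
  have hψC : ∀ x, ψ x ≤ C := fun x => tsub_le_self.trans (hΦC x)
  have hreach : ∀ x, ∃ n : ℕ, 1 ≤ n ∧ (n : ℝ≥0∞) * ψ x ≤ birkhoffSum g φ n x := by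
    intro x
    by_cases h0 : ψ x = 0
    · exact ⟨1, le_rfl, by simp [h0]⟩
    have hlt : ψ x < Φ x := by
      refine ENNReal.sub_lt_self ((hΦC x).trans_lt hC.lt_top).ne ?_ hε'
      intro h; exact h0 (by simp [hψ, h])
    obtain ⟨n, hn, hn1⟩ :=
      ((frequently_lt_of_lt_limsup (by isBoundedDefault) hlt).and_eventually
        (eventually_ge_atTop 1)).exists
    refine ⟨n, hn1, ?_⟩
    rw [mul_comm]
    exact (ENNReal.le_div_iff_mul_le (Or.inl (by exact_mod_cast (by omega : n ≠ 0)))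
      (Or.inl (ENNReal.natCast_ne_top n))).1 hn.le
  -- `E M` is the set of points where a time `n ≤ M` suffices; off it `φ` is replaced by `φ + C`.
  set E : ℕ → Set X := fun M => ⋃ n ∈ Finset.Icc 1 M, {x | (n : ℝ≥0∞) * ψ x ≤ birkhoffSum g φ n x}
    with hE
  have hEm : ∀ M, MeasurableSet (E M) := fun M =>
    Finset.measurableSet_biUnion _ fun n _ => measurableSet_le (hψm.const_mul _) (hSm n)
  have hkey : ∀ M : ℕ, 1 ≤ M → ∫⁻ x, ψ x ∂μ ≤ ∫⁻ x, φ x ∂μ + C * μ (E M)ᶜ := by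
    intro M hM
    set f : X → ℝ≥0∞ := fun x => φ x + (E M)ᶜ.indicator (fun _ => C) x with hf
    have hfm : Measurable f := hφ.add (measurable_const.indicator (hEm M).compl)
    have hfint : ∫⁻ x, f x ∂μ = ∫⁻ x, φ x ∂μ + C * μ (E M)ᶜ := by
      rw [hf, lintegral_add_left hφ, lintegral_indicator (hEm M).compl]
      simp
    rw [← hfint]
    refine le_of_forall_nat_mul_le (K := M * C)
      (ENNReal.mul_ne_top (ENNReal.natCast_ne_top M) hC) fun L => ?_
    rw [← lintegral_birkhoffSum hμ hfm, ← lintegral_const_mul _ hψm]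
    calc ∫⁻ x, (L : ℝ≥0∞) * ψ x ∂μ ≤ ∫⁻ x, (birkhoffSum g f L x + M * C) ∂μ := by
          refine lintegral_mono fun x => le_birkhoffSum_of_blocks g f ψ C M hψC
            (fun x => tsub_le_tsub_right (hΦg x) _) (fun x => ?_) L x
          by_cases hx : x ∈ E M
          · simp only [hE, Set.mem_iUnion, Finset.mem_Icc] at hx
            obtain ⟨n, ⟨hn1, hn2⟩, hn3⟩ := hx
            refine ⟨n, hn1, hn2, le_trans hn3 ?_⟩
            exact Finset.sum_le_sum fun i _ => le_self_add
          · refine ⟨1, le_rfl, hM, ?_⟩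
            simp only [Nat.cast_one, one_mul, birkhoffSum_one, hf]
            rw [Set.indicator_of_mem (show x ∈ (E M)ᶜ from hx)]
            exact (hψC x).trans le_add_self
      _ = _ := by
          rw [lintegral_add_right _ measurable_const]
          simp
  have hE0 : Tendsto (fun M => μ (E M)ᶜ) atTop (𝓝 0) := by
    have hanti : Antitone fun M => (E M)ᶜ := by
      intro a b hab
      refine Set.compl_subset_compl.2 ?_
      exact Set.biUnion_subset_biUnion_left fun n hn => by
        simp only [Finset.coe_Icc, Set.mem_Icc] at hn ⊢
        exact ⟨hn.1, hn.2.trans hab⟩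
    have := tendsto_measure_iInter_atTop (μ := μ) (fun M => (hEm M).compl.nullMeasurableSet) hanti
      ⟨0, measure_ne_top _ _⟩
    have hempty : ⋂ M, (E M)ᶜ = ∅ := by
      rw [← Set.compl_iUnion, Set.compl_empty_iff, Set.eq_univ_iff_forall]
      intro x
      obtain ⟨n, hn1, hn⟩ := hreach x
      refine Set.mem_iUnion.2 ⟨n, ?_⟩
      simp only [hE, Set.mem_iUnion, Finset.mem_Icc]
      exact ⟨n, ⟨hn1, le_rfl⟩, hn⟩
    rwa [hempty, measure_empty] at this
  have hlim : Tendsto (fun M => ∫⁻ x, φ x ∂μ + C * μ (E M)ᶜ) atTop (𝓝 (∫⁻ x, φ x ∂μ + C * 0)) :=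
    tendsto_const_nhds.add (ENNReal.Tendsto.const_mul hE0 (Or.inr hC))
  have hψint : ∫⁻ x, ψ x ∂μ ≤ ∫⁻ x, φ x ∂μ := by
    have := ge_of_tendsto hlim (by
      filter_upwards [eventually_ge_atTop 1] with M hM using hkey M hM)
    simpa using this
  calc ∫⁻ x, Φ x ∂μ ≤ ∫⁻ x, (ψ x + ε) ∂μ := lintegral_mono fun x => le_tsub_add
    _ = ∫⁻ x, ψ x ∂μ + ε := by rw [lintegral_add_right _ measurable_const]; simp
    _ ≤ _ := by gcongr

/-! ### Itineraries, cylinders and Markov weights -/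

/-- The itinerary `[idx x, idx (g x), …, idx (g^[n-1] x)]` of `x` with respect to the partition
into the level sets of `idx`. The atom of the `n`-th refined partition containing `x` consists of
the points with the same itinerary. -/
def itin {X : Type*} (g : X → X) (idx : X → ℕ) : ℕ → X → List ℕ
  | 0, _ => []
  | n + 1, x => idx x :: itin g idx n (g x)

/-- The cylinder of the word `l`: the points whose itinerary starts with `l`. -/
def cyl {X : Type*} (g : X → X) (idx : X → ℕ) (l : List ℕ) : Set X :=
  {x | itin g idx l.length x = l}

section Words

variable {X : Type*} {g : X → X} {idx : X → ℕ}

lemma itin_length (n : ℕ) (x : X) : (itin g idx n x).length = n := by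
  induction n generalizing x with
  | zero => rfl
  | succ n ih => simp [itin, ih]

lemma itin_take (k n : ℕ) (x : X) : (itin g idx n x).take k = itin g idx (min k n) x := by
  induction n generalizing x k with
  | zero => simp [itin]
  | succ n ih =>
    cases k with
    | zero => simp [itin]
    | succ k => simp [itin, ih, Nat.succ_min_succ]

lemma itin_eq_ofFn (n : ℕ) (x : X) :
    itin g idx n x = List.ofFn fun j : Fin n => idx (g^[(j : ℕ)] x) := by
  induction n generalizing x with
  | zero => simp [itin]
  | succ n ih => simp [itin, ih, List.ofFn_succ]

lemma mem_cyl_itin (n : ℕ) (x : X) : x ∈ cyl g idx (itin g idx n x) := by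
  simp [cyl, itin_length]

lemma itin_eq_of_mem_cyl {n : ℕ} {x y : X} (h : y ∈ cyl g idx (itin g idx n x)) :
    itin g idx n y = itin g idx n x := by
  simpa [cyl, itin_length] using h

lemma mem_cyl_ofFn {n : ℕ} {s : Fin n → ℕ} {x : X} :
    x ∈ cyl g idx (List.ofFn s) ↔ itin g idx n x = List.ofFn s := by
  simp [cyl]

lemma cyl_cons (a : ℕ) (l : List ℕ) :
    cyl g idx (a :: l) = idx ⁻¹' {a} ∩ g ⁻¹' cyl g idx l := by
  ext x; simp [cyl, itin]

lemma dynRefinement_eq_cyl (n : ℕ) (s : Fin n → ℕ) :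
    dynRefinement g (fun i => idx ⁻¹' {i}) n s = cyl g idx (List.ofFn s) := by
  ext x
  rw [mem_cyl_ofFn, itin_eq_ofFn, List.ofFn_inj, funext_iff]
  simp [dynRefinement]

lemma pairwise_disjoint_cyl (n : ℕ) :
    Pairwise (Function.onFun Disjoint fun s : Fin n → ℕ => cyl g idx (List.ofFn s)) := by
  intro s t hst
  refine Set.disjoint_left.2 fun x hx hy => hst ?_
  rw [mem_cyl_ofFn] at hx hy
  exact List.ofFn_injective (hx.symm.trans hy)

lemma iUnion_cyl (n : ℕ) : ⋃ s : Fin n → ℕ, cyl g idx (List.ofFn s) = Set.univ := by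
  refine Set.eq_univ_of_forall fun x => Set.mem_iUnion.2
    ⟨fun j : Fin n => idx (g^[(j : ℕ)] x), ?_⟩
  rw [mem_cyl_ofFn, itin_eq_ofFn]

lemma finite_range_itin {N : ℕ} (hN : ∀ x, idx x ≤ N) (n : ℕ) :
    (Set.range (itin g idx n)).Finite := by
  induction n with
  | zero => exact (Set.finite_singleton []).subset (by rintro _ ⟨x, rfl⟩; simp [itin])
  | succ n ih =>
    refine ((Set.finite_Iic N).image2 List.cons ih).subset ?_
    rintro _ ⟨x, rfl⟩
    exact ⟨idx x, hN x, _, ⟨g x, rfl⟩, rfl⟩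

variable [MeasurableSpace X]

lemma measurableSet_cyl (hg : Measurable g) (hidx : Measurable idx) (l : List ℕ) :
    MeasurableSet (cyl g idx l) := by
  induction l with
  | nil => simp [cyl, itin]
  | cons a l ih =>
    rw [cyl_cons]
    exact (hidx (measurableSet_singleton a)).inter (hg ih)

lemma measurable_comp_itin (hg : Measurable g) (hidx : Measurable idx) {β : Type*}
    [MeasurableSpace β] (f : List ℕ → β) (n : ℕ) : Measurable fun x => f (itin g idx n x) := by
  intro t _
  have : (fun x => f (itin g idx n x)) ⁻¹' t
      = ⋃ l ∈ {l : List ℕ | l.length = n ∧ f l ∈ t}, cyl g idx l := by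
    ext x
    simp only [Set.mem_preimage, Set.mem_iUnion, exists_prop]
    constructor
    · intro h
      exact ⟨_, ⟨itin_length n x, h⟩, mem_cyl_itin n x⟩
    · rintro ⟨l, ⟨rfl, hl⟩, hx⟩
      have hx' : itin g idx l.length x = l := hx
      rwa [hx']
  rw [this]
  exact MeasurableSet.biUnion (Set.to_countable _) fun l _ => measurableSet_cyl hg hidx l

lemma tsum_measure_cyl_cons {μ : Measure X} (hμ : MeasurePreserving g μ μ)
    (hidx : Measurable idx) (l : List ℕ) :
    ∑' a, μ (cyl g idx (a :: l)) = μ (cyl g idx l) := by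
  have hm := measurableSet_cyl hμ.measurable hidx
  rw [← measure_iUnion]
  · rw [← hμ.measure_preimage (hm l).nullMeasurableSet]
    congr 1
    ext x
    simp [cyl_cons]
  · intro a b hab
    refine Set.disjoint_left.2 fun x hx hy => hab ?_
    simp only [cyl_cons] at hx hy
    exact hx.1.symm.trans hy.1
  · exact fun a => hm _

/-- The weight of a word under the `k`-step Markov chain, run backwards in time, whose transition
probabilities are those of `μ`: the letter `a` is prepended to `l` with the conditional probability
of `a` given the first `k` letters of `l`. Transitions from null words
have weight `0 / 0 = 0`, so that the weights of the words of a given length sum to at most `1`. -/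
def markov (μ : Measure X) (g : X → X) (idx : X → ℕ) (k : ℕ) : List ℕ → ℝ≥0∞
  | [] => 1
  | a :: l => markov μ g idx k l *
      (μ (cyl g idx (a :: l.take k)) / μ (cyl g idx (l.take k)))

lemma tsum_markov_le_one {μ : Measure X} (hμ : MeasurePreserving g μ μ)
    (hidx : Measurable idx) (k n : ℕ) :
    ∑' s : Fin n → ℕ, markov μ g idx k (List.ofFn s) ≤ 1 := by
  induction n with
  | zero => simp [markov]
  | succ n ih =>
    rw [← (Fin.consEquiv fun _ : Fin (n + 1) => ℕ).tsum_eq, ENNReal.tsum_prod'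
      (f := fun c => markov μ g idx k (List.ofFn ((Fin.consEquiv fun _ : Fin (n + 1) => ℕ) c))),
      ENNReal.tsum_comm]
    refine le_trans (ENNReal.tsum_le_tsum fun s => ?_) ih
    have hcons : ∀ a : ℕ, List.ofFn ((Fin.consEquiv fun _ : Fin (n + 1) => ℕ) (a, s))
        = a :: List.ofFn s := fun a => List.ofFn_cons a s
    simp only [hcons, markov]
    rw [ENNReal.tsum_mul_left]
    simp only [div_eq_mul_inv]
    rw [ENNReal.tsum_mul_right, tsum_measure_cyl_cons hμ hidx, ← div_eq_mul_inv]
    exact mul_le_of_le_one_right' ENNReal.div_self_le_one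

/-- The words `w` of length `n` with `ν (cyl w) < c * markov w` have cylinders of total
`ν`-measure at most `c`. -/
lemma measure_lt_markov_le {μ : Measure X} (hμ : MeasurePreserving g μ μ)
    (hidx : Measurable idx) (ν : Measure X) (c : ℝ≥0∞) (k n : ℕ) :
    ν {x | ν (cyl g idx (itin g idx n x)) < c * markov μ g idx k (itin g idx n x)} ≤ c := by
  set B : Set (Fin n → ℕ) :=
    {s | ν (cyl g idx (List.ofFn s)) < c * markov μ g idx k (List.ofFn s)}
  calc _ ≤ ν (⋃ s ∈ B, cyl g idx (List.ofFn s)) := by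
        refine measure_mono fun x hx => ?_
        refine Set.mem_biUnion (x := fun j : Fin n => idx (g^[(j : ℕ)] x)) ?_ ?_
        · simp only [B, Set.mem_ofPred_eq]
          rw [← itin_eq_ofFn]
          exact hx
        · rw [mem_cyl_ofFn, itin_eq_ofFn]
    _ ≤ ∑' s : B, ν (cyl g idx (List.ofFn s.1)) := measure_biUnion_le ν (Set.to_countable _) _
    _ ≤ ∑' s : B, c * markov μ g idx k (List.ofFn s.1) :=
        ENNReal.tsum_le_tsum fun s => le_of_lt s.2
    _ ≤ ∑' s : Fin n → ℕ, c * markov μ g idx k (List.ofFn s) :=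
        ENNReal.tsum_comp_le_tsum_of_injective Subtype.val_injective _
    _ ≤ c := by
        rw [ENNReal.tsum_mul_left]
        exact mul_le_of_le_one_right' (tsum_markov_le_one hμ hidx k n)

/-- Since `ν`-null sets are `μ`-null, Borel–Cantelli gives, at `μ`-almost every point, the lower
bound `e^{-nε} * markov` for the `ν`-measure of the `n`-cylinder once `n` is large. -/
lemma ae_eventually_markov_le {μ ν : Measure X} (hμ : MeasurePreserving g μ μ)
    (hidx : Measurable idx) (hν : μ ≪ ν) {ε : ℝ} (hε : 0 < ε) (k : ℕ) :
    ∀ᵐ x ∂μ, ∀ᶠ n : ℕ in atTop, ENNReal.ofReal (Real.exp (-(n * ε))) *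
      markov μ g idx k (itin g idx n x) ≤ ν (cyl g idx (itin g idx n x)) := by
  have hsum : Summable fun n : ℕ => Real.exp (-(n * ε)) := by
    have := Real.summable_exp_nat_mul_iff.2 (neg_lt_zero.2 hε)
    simpa [mul_neg] using this
  have hfin : ∑' n : ℕ, ν {x | ν (cyl g idx (itin g idx n x)) <
      ENNReal.ofReal (Real.exp (-(n * ε))) * markov μ g idx k (itin g idx n x)} ≠ ⊤ :=
    ne_top_of_le_ne_top hsum.tsum_ofReal_ne_top
      (ENNReal.tsum_le_tsum fun n => measure_lt_markov_le hμ hidx ν _ k n)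
  filter_upwards [hν.ae_le (ae_eventually_notMem hfin)] with x hx
  filter_upwards [hx] with n hn
  exact not_lt.1 hn

end Words

/-! ### Information functions and the pointwise bound -/

section Information

variable {X : Type*} [MeasurableSpace X] {g : X → X} {idx : X → ℕ}

/-- The information function `-log μ(P^n(x))` of the `n`-th refined partition; by the convention
`log 0 = 0` it vanishes on null atoms. -/
def info (μ : Measure X) (g : X → X) (idx : X → ℕ) (n : ℕ) (x : X) : ℝ :=
  -Real.log (μ (cyl g idx (itin g idx n x))).toReal

lemma info_nonneg (μ : Measure X) [IsProbabilityMeasure μ] (n : ℕ) (x : X) :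
    0 ≤ info μ g idx n x := by
  have : Real.log (μ (cyl g idx (itin g idx n x))).toReal ≤ 0 :=
    Real.log_nonpos ENNReal.toReal_nonneg (measureReal_le_one (μ := μ))
  simp only [info]; linarith

lemma exists_info_le (μ : Measure X) {N : ℕ} (hN : ∀ x, idx x ≤ N) (k : ℕ) :
    ∃ C : ℝ, 0 ≤ C ∧ ∀ i ≤ k, ∀ x, info μ g idx i x ≤ C := by
  have h1 : ∀ i, ∃ C : ℝ, ∀ x, info μ g idx i x ≤ C := by
    intro i
    obtain ⟨C, hC⟩ := ((finite_range_itin (g := g) hN i).image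
      fun l => -Real.log (μ (cyl g idx l)).toReal).bddAbove
    exact ⟨C, fun x => hC ⟨_, ⟨x, rfl⟩, rfl⟩⟩
  choose C hC using h1
  refine ⟨∑ i ∈ Finset.range (k + 1), |C i|, Finset.sum_nonneg fun _ _ => abs_nonneg _,
    fun i hi x => ?_⟩
  refine (hC i x).trans ((le_abs_self _).trans ?_)
  exact Finset.single_le_sum (f := fun i => |C i|) (fun _ _ => abs_nonneg _)
    (Finset.mem_range.2 (by omega))

lemma measurable_info {μ : Measure X} (hg : Measurable g) (hidx : Measurable idx) (n : ℕ) :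
    Measurable (info μ g idx n) :=
  measurable_comp_itin hg hidx (fun l => -Real.log (μ (cyl g idx l)).toReal) n

lemma lintegral_info {μ : Measure X} [IsProbabilityMeasure μ] (hg : Measurable g)
    (hidx : Measurable idx) (n : ℕ) :
    ∫⁻ x, ENNReal.ofReal (info μ g idx n x) ∂μ
      = partitionEntropy μ (dynRefinement g (fun i => idx ⁻¹' {i}) n) := by
  have hm : ∀ s : Fin n → ℕ, MeasurableSet (cyl g idx (List.ofFn s)) := fun s =>
    measurableSet_cyl hg hidx _
  rw [← setLIntegral_univ, ← iUnion_cyl (g := g) (idx := idx) n,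
    lintegral_iUnion hm (pairwise_disjoint_cyl n)]
  refine tsum_congr fun s => ?_
  rw [dynRefinement_eq_cyl, setLIntegral_congr_fun (g := fun _ =>
    ENNReal.ofReal (-Real.log (μ (cyl g idx (List.ofFn s))).toReal)) (hm s), setLIntegral_const]
  · rw [Real.negMulLog, neg_mul, ← mul_neg, ENNReal.ofReal_mul ENNReal.toReal_nonneg,
      ENNReal.ofReal_toReal (measure_ne_top _ _), mul_comm]
  · intro x hx
    rw [mem_cyl_ofFn] at hx
    simp only [info, hx]

/-- Almost every point lies in no null cylinder, and so does its whole orbit. -/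
lemma ae_forall_cyl_ne_zero {μ : Measure X} (hμ : MeasurePreserving g μ μ) :
    ∀ᵐ x ∂μ, ∀ j n, μ (cyl g idx (itin g idx n (g^[j] x))) ≠ 0 := by
  have h : ∀ᵐ x ∂μ, ∀ n, μ (cyl g idx (itin g idx n x)) ≠ 0 := by
    rw [ae_all_iff]
    intro n
    have h0 : μ (⋃ l ∈ {l : List ℕ | μ (cyl g idx l) = 0}, cyl g idx l) = 0 :=
      (measure_biUnion_null_iff (Set.to_countable _)).2 fun l hl => hl
    refine measure_mono_null (fun x hx => ?_) h0
    refine Set.mem_biUnion (x := itin g idx n x) ?_ (mem_cyl_itin n x)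
    exact not_not.1 hx
  rw [ae_all_iff]
  intro j
  exact (hμ.iterate j).quasiMeasurePreserving.ae h

/-- The conditional information of the first letter given the next `k` letters, truncated at `0`
(which only matters on null cylinders). -/
def condInfo (μ : Measure X) (g : X → X) (idx : X → ℕ) (k : ℕ) (x : X) : ℝ :=
  max (info μ g idx (k + 1) x - info μ g idx k (g x)) 0

lemma measurable_condInfo {μ : Measure X} (hg : Measurable g) (hidx : Measurable idx) (k : ℕ) :
    Measurable (condInfo μ g idx k) :=
  ((measurable_info hg hidx _).sub ((measurable_info hg hidx k).comp hg)).max measurable_const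

lemma info_le_info_succ {μ : Measure X} [IsProbabilityMeasure μ] (hμ : MeasurePreserving g μ μ)
    (hidx : Measurable idx) (k : ℕ) {x : X} (hx : μ (cyl g idx (itin g idx (k + 1) x)) ≠ 0) :
    info μ g idx k (g x) ≤ info μ g idx (k + 1) x := by
  have hle : μ (cyl g idx (itin g idx (k + 1) x)) ≤ μ (cyl g idx (itin g idx k (g x))) := by
    rw [← hμ.measure_preimage (measurableSet_cyl hμ.measurable hidx
      (itin g idx k (g x))).nullMeasurableSet]
    refine measure_mono ?_
    rw [itin, cyl_cons]
    exact Set.inter_subset_right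
  simp only [info]
  refine neg_le_neg (Real.log_le_log (ENNReal.toReal_pos hx (measure_ne_top _ _)) ?_)
  exact ENNReal.toReal_mono (measure_ne_top _ _) hle

/-- Chain rule: the mean conditional information is `H(P^{k+1}) - H(P^k)`. -/
lemma lintegral_condInfo {μ : Measure X} [IsProbabilityMeasure μ] (hμ : MeasurePreserving g μ μ)
    (hidx : Measurable idx) (k : ℕ) :
    partitionEntropy μ (dynRefinement g (fun i => idx ⁻¹' {i}) k)
        + ∫⁻ x, ENNReal.ofReal (condInfo μ g idx k x) ∂μ
      = partitionEntropy μ (dynRefinement g (fun i => idx ⁻¹' {i}) (k + 1)) := by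
  have hm := (measurable_info (μ := μ) hμ.measurable hidx k).ennreal_ofReal
  rw [← lintegral_info hμ.measurable hidx, ← lintegral_info hμ.measurable hidx,
    ← hμ.lintegral_comp hm,
    ← lintegral_add_left (f := fun x => ENNReal.ofReal (info μ g idx k (g x)))
      (hm.comp hμ.measurable)]
  refine lintegral_congr_ae ?_
  filter_upwards [ae_forall_cyl_ne_zero (idx := idx) hμ] with x hx
  have h := info_le_info_succ hμ hidx k (hx 0 (k + 1))
  simp only [Function.iterate_zero, id] at h
  have hc : condInfo μ g idx k x = info μ g idx (k + 1) x - info μ g idx k (g x) :=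
    max_eq_left (by linarith)
  rw [hc, ← ENNReal.ofReal_add (info_nonneg μ _ _) (by linarith)]
  congr 1
  ring

/-- The Markov weight of the itinerary of `x` is at least `e^{-S_n condInfo}`, up to a factor
`e^{-C}` for each of the at most `k` last letters, which see fewer than `k` letters after them. -/
lemma exp_le_markov {μ : Measure X} [IsProbabilityMeasure μ] {k : ℕ} {C : ℝ}
    (hC : ∀ i ≤ k, ∀ x, info μ g idx i x ≤ C) (n : ℕ) {x : X}
    (hx : ∀ j n, μ (cyl g idx (itin g idx n (g^[j] x))) ≠ 0) :
    ENNReal.ofReal (Real.exp (-(birkhoffSum g (condInfo μ g idx k) n x + (min n k : ℕ) * C)))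
      ≤ markov μ g idx k (itin g idx n x) := by
  induction n generalizing x with
  | zero => simp [itin, markov]
  | succ n ih =>
    have ih' := ih (x := g x) fun j m => by
      have := hx (j + 1) m
      rwa [Function.iterate_succ_apply] at this
    simp only [itin, markov, itin_take]
    have hnum : μ (cyl g idx (itin g idx (min k n + 1) x)) ≠ 0 := hx 0 _
    have hden : μ (cyl g idx (itin g idx (min k n) (g x))) ≠ 0 := hx 1 _
    have hratio : μ (cyl g idx (idx x :: itin g idx (min k n) (g x)))
        / μ (cyl g idx (itin g idx (min k n) (g x)))
        = ENNReal.ofReal (Real.exp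
          (-(info μ g idx (min k n + 1) x - info μ g idx (min k n) (g x)))) := by
      change μ (cyl g idx (itin g idx (min k n + 1) x)) / _ = _
      have h1 := ENNReal.toReal_pos hnum (measure_ne_top _ _)
      have h2 := ENNReal.toReal_pos hden (measure_ne_top _ _)
      simp only [info]
      rw [show ∀ a b : ℝ, -(-a - -b) = a - b by intros; ring, Real.exp_sub, Real.exp_log h1,
        Real.exp_log h2, ENNReal.ofReal_div_of_pos h2, ENNReal.ofReal_toReal (measure_ne_top _ _),
        ENNReal.ofReal_toReal (measure_ne_top _ _)]
    rw [hratio]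
    refine le_trans ?_ (mul_le_mul_left ih' _)
    rw [← ENNReal.ofReal_mul (Real.exp_nonneg _), ← Real.exp_add, birkhoffSum_succ']
    refine ENNReal.ofReal_le_ofReal (Real.exp_le_exp.2 ?_)
    have hcn : 0 ≤ condInfo μ g idx k x := le_max_right _ _
    rcases lt_or_ge n k with h | h
    · rw [min_eq_left (by omega : n + 1 ≤ k), min_eq_left h.le, min_eq_right h.le]
      have h1 := hC (n + 1) (by omega) x
      have h2 := info_nonneg (g := g) (idx := idx) μ n (g x)
      push_cast
      linarith
    · rw [min_eq_right (by omega : k ≤ n + 1), min_eq_right h, min_eq_left h]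
      have h1 : info μ g idx (k + 1) x - info μ g idx k (g x) ≤ condInfo μ g idx k x :=
        le_max_left _ _
      linarith

end Information

/-- If the atoms of the partition have diameter at most `δ`, the local entropy of `ν` is
bounded at `μ`-almost every point by the upper Birkhoff average of the conditional information. -/
lemma ae_localEntropy_le {X : Type*} [MetricSpace X] [MeasurableSpace X] {g : X → X} {idx : X → ℕ}
    {μ ν : Measure X} [IsProbabilityMeasure μ] (hμ : MeasurePreserving g μ μ)
    (hidx : Measurable idx) (hν : μ ≪ ν) {N : ℕ} (hN : ∀ x, idx x ≤ N) {δ : ℝ}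
    (hδ : ∀ x y, idx x = idx y → dist x y ≤ δ) {ε : ℝ} (hε : 0 < ε) (k : ℕ) :
    ∀ᵐ x ∂μ, localEntropy ν g δ x ≤
      limsup (fun n : ℕ => birkhoffSum g (fun y => ENNReal.ofReal (condInfo μ g idx k y)) n x / n)
        atTop + ENNReal.ofReal ε := by
  obtain ⟨C, hC0, hC⟩ := exists_info_le (g := g) μ hN (k + 1)
  set K : ℝ := ε + C + k * C with hK
  filter_upwards [ae_eventually_markov_le hμ hidx hν hε k, ae_forall_cyl_ne_zero (idx := idx) hμ]
    with x hx hx0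
  have hlim : Tendsto (fun n : ℕ => ENNReal.ofReal (ε + K / n)) atTop (𝓝 (ENNReal.ofReal ε)) := by
    refine ENNReal.tendsto_ofReal ?_
    simpa using tendsto_const_nhds.add (tendsto_const_div_atTop_nhds_zero_nat K)
  refine le_trans ?_ (limsup_add_le_of_tendsto hlim)
  refine limsup_le_limsup ?_
  filter_upwards [(tendsto_add_atTop_nat 1).eventually hx, eventually_gt_atTop 0] with n hn hn0
  have hn0' : (0 : ℝ) < n := by exact_mod_cast hn0
  set S : ℝ := birkhoffSum g (condInfo μ g idx k) n x with hS
  have hS0 : 0 ≤ S := Finset.sum_nonneg fun _ _ => le_max_right _ _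
  -- The `n`-th Bowen ball contains the atom of the refinement of order `n + 1`.
  have hsub : cyl g idx (itin g idx (n + 1) x) ⊆ bowenBall g δ x n := by
    intro y hy j hj
    have h := itin_eq_of_mem_cyl hy
    rw [itin_eq_ofFn, itin_eq_ofFn, List.ofFn_inj] at h
    exact hδ _ _ (congrFun h ⟨j, by omega⟩).symm
  have hlast : condInfo μ g idx k (g^[n] x) ≤ C := by
    refine max_le ?_ hC0
    have h1 := hC (k + 1) le_rfl (g^[n] x)
    have h2 := info_nonneg (g := g) (idx := idx) μ k (g (g^[n] x))
    linarith
  have hlow : ENNReal.ofReal (Real.exp (-(S + n * ε + K))) ≤ ν (bowenBall g δ x n) := by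
    refine le_trans ?_ (hn.trans (measure_mono hsub))
    refine le_trans ?_ (mul_le_mul_right
      (exp_le_markov (fun i hi => hC i (hi.trans k.le_succ)) (n + 1) hx0) _)
    rw [← ENNReal.ofReal_mul (Real.exp_nonneg _), ← Real.exp_add, birkhoffSum_succ]
    refine ENNReal.ofReal_le_ofReal (Real.exp_le_exp.2 ?_)
    have h3 : ((min (n + 1) k : ℕ) : ℝ) * C ≤ k * C := by
      gcongr
      exact min_le_right _ _
    push_cast at h3 ⊢
    rw [hK]
    linarith
  have hpos : ν (bowenBall g δ x n) ≠ 0 := fun h => by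
    rw [h] at hlow
    exact absurd hlow (by simp [Real.exp_pos])
  rw [if_neg hpos]
  have hSsum : birkhoffSum g (fun y => ENNReal.ofReal (condInfo μ g idx k y)) n x
      = ENNReal.ofReal S :=
    (ENNReal.ofReal_sum_of_nonneg fun _ _ => le_max_right _ _).symm
  have hfinal : -Real.log (ν (bowenBall g δ x n)).toReal ≤ S + n * ε + K := by
    by_cases htop : ν (bowenBall g δ x n) = ⊤
    · have : 0 ≤ S + n * ε + K := by positivity
      simpa [htop] using this
    · rw [neg_le, ← Real.log_exp (-(S + n * ε + K))]
      refine Real.log_le_log (Real.exp_pos _) ?_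
      exact (ENNReal.ofReal_le_iff_le_toReal htop).1 hlow
  have hnE : (n : ℝ≥0∞) = ENNReal.ofReal n := (ENNReal.ofReal_natCast n).symm
  rw [hSsum, hnE, ← ENNReal.ofReal_div_of_pos hn0', ← ENNReal.ofReal_add (by positivity)
    (by positivity)]
  refine ENNReal.ofReal_le_ofReal ?_
  rw [div_le_iff₀ hn0']
  refine hfinal.trans (le_of_eq ?_)
  field_simp
  ring

/-! ### Choice of the Markov order and of the partition -/

/-- If every increment of `H` is at least `c`, then `liminf H n / n ≥ c`; hence, for
`c > liminf H n / n`, some increment is at most `c`. -/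
lemma exists_increment_le (H : ℕ → ℝ≥0∞) {h c : ℝ≥0∞}
    (hh : liminf (fun n : ℕ => H n / n) atTop = h) (hc : h < c) : ∃ k, H (k + 1) ≤ H k + c := by
  by_contra! hcon
  have h1 : ∀ n : ℕ, n * c ≤ H n := by
    intro n
    induction n with
    | zero => simp
    | succ n ih =>
      push_cast
      rw [add_mul, one_mul]
      exact (add_le_add_left ih c).trans (hcon n).le
  refine absurd hc (not_lt.2 ?_)
  rw [← hh]
  refine le_liminf_of_le (by isBoundedDefault) ?_
  filter_upwards [eventually_gt_atTop 0] with n hn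
  rw [ENNReal.le_div_iff_mul_le (Or.inl (by exact_mod_cast hn.ne'))
    (Or.inl (ENNReal.natCast_ne_top n)), mul_comm]
  exact h1 n

/-- A compact metric space has finite Borel partitions into sets of arbitrarily small diameter,
given here by the function sending a point to the index of its atom. -/
lemma exists_measurable_idx {X : Type*} [MetricSpace X] [CompactSpace X] [Nonempty X]
    [MeasurableSpace X] [BorelSpace X] {δ : ℝ} (hδ : 0 < δ) :
    ∃ (idx : X → ℕ) (N : ℕ), Measurable idx ∧ (∀ x, idx x ≤ N) ∧
      ∀ x y, idx x = idx y → dist x y ≤ δ := by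
  set e := TopologicalSpace.denseSeq X
  have hδ2 : 0 < δ / 2 := by positivity
  obtain ⟨t, ht⟩ := isCompact_univ.elim_finite_subcover (fun n => Metric.ball (e n) (δ / 2))
    (fun n => Metric.isOpen_ball) (fun x _ => by
      obtain ⟨n, hn⟩ := (TopologicalSpace.denseRange_denseSeq X).exists_dist_lt x hδ2
      exact Set.mem_iUnion.2 ⟨n, hn⟩)
  set N := t.sup id
  have hnear : ∀ x, dist (e (SimpleFunc.nearestPtInd e N x)) x ≤ δ / 2 := by
    intro x
    obtain ⟨n, hn, hxn⟩ := Set.mem_iUnion₂.1 (ht (Set.mem_univ x))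
    have h1 := SimpleFunc.edist_nearestPt_le e x (Finset.le_sup (f := id) hn : n ≤ N)
    rw [SimpleFunc.nearestPt, SimpleFunc.map_apply, edist_dist, edist_dist,
      ENNReal.ofReal_le_ofReal_iff dist_nonneg] at h1
    rw [Metric.mem_ball, dist_comm] at hxn
    exact h1.trans hxn.le
  refine ⟨SimpleFunc.nearestPtInd e N, N, SimpleFunc.measurable _,
    SimpleFunc.nearestPtInd_le e N, fun x y hxy => ?_⟩
  have h1 := hnear x
  have h2 := hnear y
  rw [← hxy] at h2
  linarith [dist_triangle_left x y (e (SimpleFunc.nearestPtInd e N x))]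

lemma isFinitePartition_preimage {X : Type*} [MeasurableSpace X] {idx : X → ℕ}
    (hidx : Measurable idx) {N : ℕ} (hN : ∀ x, idx x ≤ N) :
    IsFinitePartition fun i => idx ⁻¹' {i} := by
  refine ⟨fun i => hidx (measurableSet_singleton i), fun i j hij => ?_, ?_, N + 1, fun i hi => ?_⟩
  · exact Set.disjoint_left.2 fun x hx hy => hij (hx.symm.trans hy)
  · exact Set.eq_univ_of_forall fun x => Set.mem_iUnion.2 ⟨idx x, rfl⟩
  · refine Set.eq_empty_of_forall_notMem fun x hx => ?_
    have h1 : idx x = i := hx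
    have := hN x
    omega

/-- **Mañé's entropy lower bound (Lemma 1 of Sun–Tian; Mañé 1981).**
If `g` is a Borel measurable map of a compact metric space `M`, `μ` is a `g`-invariant
Borel probability measure and `ν ≫ μ` is another Borel measure on `M` (not necessarily
invariant), then `h_μ(g) ≥ sup_{δ>0} ∫ h_ν(g, δ, x) dμ(x)`. -/
theorem entropy_ge_integral_localEntropy
    {X : Type*} [MetricSpace X] [CompactSpace X] [MeasurableSpace X] [BorelSpace X]
    (g : X → X) (hg : Measurable g)
    (μ : Measure X) [IsProbabilityMeasure μ] (hμ : MeasurePreserving g μ μ)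
    (ν : Measure X) (hν : μ ≪ ν) :
    ⨆ (δ : ℝ) (_ : 0 < δ), ∫⁻ x, localEntropy ν g δ x ∂μ ≤ metricEntropy μ g := by
  refine iSup₂_le fun δ hδ => ?_
  have : Nonempty X := nonempty_of_isProbabilityMeasure μ
  obtain ⟨idx, N, hidx, hN, hdiam⟩ := exists_measurable_idx (X := X) hδ
  set P : ℕ → Set X := fun i => idx ⁻¹' {i} with hP
  have hle : partitionDynEntropy μ g P ≤ metricEntropy μ g :=
    le_iSup₂ (f := fun (P : ℕ → Set X) (_ : IsFinitePartition P) => partitionDynEntropy μ g P) P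
      (isFinitePartition_preimage hidx hN)
  refine le_trans (ENNReal.le_of_forall_pos_le_add fun ε hε hlt => ?_) hle
  have hε2 : (ε : ℝ≥0∞) / 2 ≠ 0 := by simpa using hε.ne'
  obtain ⟨k, hk⟩ := exists_increment_le (fun n => partitionEntropy μ (dynRefinement g P n))
    (h := partitionDynEntropy μ g P) rfl (ENNReal.lt_add_right hlt.ne hε2)
  obtain ⟨C, hC0, hC⟩ := exists_info_le (g := g) μ hN (k + 1)
  have hHfin : partitionEntropy μ (dynRefinement g P k) ≠ ⊤ := by
    rw [hP, ← lintegral_info hg hidx]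
    refine ne_top_of_le_ne_top (b := ENNReal.ofReal C) ENNReal.ofReal_ne_top ?_
    calc _ ≤ ∫⁻ _, ENNReal.ofReal C ∂μ :=
          lintegral_mono fun x => ENNReal.ofReal_le_ofReal (hC k k.le_succ x)
      _ = ENNReal.ofReal C := by simp
  have hcond : ∫⁻ x, ENNReal.ofReal (condInfo μ g idx k x) ∂μ
      ≤ partitionDynEntropy μ g P + ε / 2 := by
    rw [← ENNReal.add_le_add_iff_left hHfin, lintegral_condInfo hμ hidx]
    exact hk
  have hε0 : (0 : ℝ) < ε / 2 := by
    have : (0 : ℝ) < ε := by exact_mod_cast hε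
    linarith
  have hcC : ∀ x, condInfo μ g idx k x ≤ C := by
    intro x
    refine max_le ?_ hC0
    have h1 := hC (k + 1) le_rfl x
    have h2 := info_nonneg (g := g) (idx := idx) μ k (g x)
    linarith
  have hφ := (measurable_condInfo (μ := μ) hg hidx k).ennreal_ofReal
  calc ∫⁻ x, localEntropy ν g δ x ∂μ
      ≤ ∫⁻ x, (limsup (fun n : ℕ =>
          birkhoffSum g (fun y => ENNReal.ofReal (condInfo μ g idx k y)) n x / n) atTop
          + ENNReal.ofReal (ε / 2)) ∂μ :=
        lintegral_mono_ae (ae_localEntropy_le hμ hidx hν hN hdiam hε0 k)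
    _ = ∫⁻ x, limsup (fun n : ℕ =>
          birkhoffSum g (fun y => ENNReal.ofReal (condInfo μ g idx k y)) n x / n) atTop ∂μ
          + ENNReal.ofReal (ε / 2) := by
        rw [lintegral_add_right _ measurable_const]
        simp
    _ ≤ (partitionDynEntropy μ g P + ε / 2) + ε / 2 := by
        refine add_le_add ((lintegral_limsup_birkhoffSum_le hμ hφ ENNReal.ofReal_ne_top
          fun x => ENNReal.ofReal_le_ofReal (hcC x)).trans hcond) (le_of_eq ?_)
        rw [ENNReal.ofReal_div_of_pos two_pos, ENNReal.ofReal_coe_nnreal, ENNReal.ofReal_ofNat]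
    _ = partitionDynEntropy μ g P + ε := by rw [add_assoc, ENNReal.add_halves]

end
end

section
/- Let E₂ and E₁ be finite-dimensional normed spaces, U ⊆ E₂ open, ψ : U → E₁ Lipschitz with constant c, T : E₂ → E₂′ a linear isomorphism with minimal norm m(T) ≥ β, and q a C¹ map whose partial derivatives in both variables have norm ≤ τα. Define φ : U → E₂′ by φ(v) = Tv + q(ψ(v), v). If β − τα(1 + c) > 0, then ‖φ(v) − φ(w)‖ ≥ (m(T) − τα(1 + c))‖v − w‖ for all v, w ∈ U; consequently φ is a homeomorphism of U onto the open set φ(U) whose inverse has Lipschitz constant ≤ (β − τα(1 + c))⁻¹. -/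
/-!
The map `φ` is a Lipschitz perturbation of the isomorphism `T`. The bounds on the two partial
derivatives of `q` and the mean value inequality, applied in one variable at a time, give
`‖q (a, v) - q (b, w)‖ ≤ τα (‖a - b‖ + ‖v - w‖)` (`norm_sub_le_of_partial_fderiv_le`), so that
`v ↦ q (ψ v, v)` is Lipschitz on `U` with constant `τα (1 + c)`. Together with
`m(T) ‖v‖ ≤ ‖T v‖` (`conorm_mul_norm_le`) this yields the lower estimate, hence injectivity and the
Lipschitz bound for the inverse. Since `τα (1 + c) < β ≤ m(T)`, the map `φ` approximates `T` on `U`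
better than the norm of `T⁻¹` requires, and openness of the image is the quantitative surjectivity
theorem behind the inverse function theorem (`ApproximatesLinearOn.open_image`).
-/

open MeasureTheory Filter Topology Set

noncomputable section

/-- The minimal norm `m(A) = inf_{‖v‖=1} ‖A v‖` of a linear map;
for invertible `A` this equals `‖A⁻¹‖⁻¹`. -/
def conorm {X Y : Type*} [NormedAddCommGroup X] [NormedAddCommGroup Y]
    [NormedSpace ℝ X] [NormedSpace ℝ Y] (A : X →L[ℝ] Y) : ℝ :=
  ⨅ v : {v : X // ‖v‖ = 1}, ‖A v.1‖

theorem conorm_mul_norm_le {X Y : Type*} [NormedAddCommGroup X] [NormedAddCommGroup Y]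
    [NormedSpace ℝ X] [NormedSpace ℝ Y] (A : X →L[ℝ] Y) (v : X) :
    conorm A * ‖v‖ ≤ ‖A v‖ := by
  rcases eq_or_ne v 0 with rfl | hv
  · simp
  have hv' : 0 < ‖v‖ := norm_pos_iff.mpr hv
  have hu : ‖(‖v‖⁻¹ • v)‖ = 1 := by
    rw [norm_smul, norm_inv, norm_norm, inv_mul_cancel₀ hv'.ne']
  have hle : conorm A ≤ ‖A (‖v‖⁻¹ • v)‖ :=
    ciInf_le (f := fun u : {u : X // ‖u‖ = 1} => ‖A u.1‖)
      ⟨0, by rintro _ ⟨u, rfl⟩; exact norm_nonneg _⟩ ⟨_, hu⟩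
  rw [map_smul, norm_smul, norm_inv, norm_norm] at hle
  calc conorm A * ‖v‖ ≤ ‖v‖⁻¹ * ‖A v‖ * ‖v‖ := by gcongr
    _ = ‖A v‖ := by field_simp

/-- A differentiable map on a product whose two partial derivatives are bounded by `K` is
`K`-Lipschitz for the sum norm: the mean value inequality applies along each factor. -/
theorem norm_sub_le_of_partial_fderiv_le {X Y Z : Type*}
    [NormedAddCommGroup X] [NormedSpace ℝ X] [NormedAddCommGroup Y] [NormedSpace ℝ Y]
    [NormedAddCommGroup Z] [NormedSpace ℝ Z] {q : X × Y → Z} (hq : Differentiable ℝ q) {K : ℝ}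
    (h₁ : ∀ p, ‖(fderiv ℝ q p).comp (ContinuousLinearMap.inl ℝ X Y)‖ ≤ K)
    (h₂ : ∀ p, ‖(fderiv ℝ q p).comp (ContinuousLinearMap.inr ℝ X Y)‖ ≤ K)
    (a b : X) (v w : Y) : ‖q (a, v) - q (b, w)‖ ≤ K * (‖a - b‖ + ‖v - w‖) := by
  have e₁ : ‖q (a, v) - q (b, v)‖ ≤ K * ‖a - b‖ :=
    convex_univ.norm_image_sub_le_of_norm_hasFDerivWithin_le (f := fun x => q (x, v))
      (fun x _ => ((hq (x, v)).hasFDerivAt.comp x (hasFDerivAt_prodMk_left x v)).hasFDerivWithinAt)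
      (fun x _ => h₁ (x, v)) (mem_univ b) (mem_univ a)
  have e₂ : ‖q (b, v) - q (b, w)‖ ≤ K * ‖v - w‖ :=
    convex_univ.norm_image_sub_le_of_norm_hasFDerivWithin_le (f := fun y => q (b, y))
      (fun y _ => ((hq (b, y)).hasFDerivAt.comp y (hasFDerivAt_prodMk_right b y)).hasFDerivWithinAt)
      (fun y _ => h₂ (b, y)) (mem_univ w) (mem_univ v)
  calc ‖q (a, v) - q (b, w)‖ ≤ ‖q (a, v) - q (b, v)‖ + ‖q (b, v) - q (b, w)‖ :=
        norm_sub_le_norm_sub_add_norm_sub _ _ _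
    _ ≤ K * (‖a - b‖ + ‖v - w‖) := by linarith

/-- **The injectivity estimate in the graph transform lemma (Sun–Tian, proof of
Lemma 2; after Mañé).**  Let `E₁, E₂` be finite-dimensional normed spaces, `U ⊆ E₂`
open, `ψ : U → E₁` Lipschitz with constant `c`, `T : E₂ → E₂'` a linear isomorphism with
minimal norm `m(T) ≥ β`, and `q` a `C¹` map whose partial derivatives in both variables
have norm `≤ τα`.  Define `φ : U → E₂'` by `φ(v) = T v + q(ψ(v), v)`.  If
`β − τα(1+c) > 0` then `‖φ(v) − φ(w)‖ ≥ (m(T) − τα(1+c))‖v − w‖` on `U`; consequently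
`φ` is a homeomorphism of `U` onto the open set `φ(U)` whose inverse is Lipschitz with
constant `≤ (β − τα(1+c))⁻¹`. -/
theorem graph_transform_injectivity_estimate
    {E₁ E₂ E₂' : Type*}
    [NormedAddCommGroup E₁] [NormedSpace ℝ E₁] [FiniteDimensional ℝ E₁]
    [NormedAddCommGroup E₂] [NormedSpace ℝ E₂] [FiniteDimensional ℝ E₂]
    [NormedAddCommGroup E₂'] [NormedSpace ℝ E₂']
    (α β c τ : ℝ) (hα : 0 ≤ α) (hβ : 0 < β) (hc : 0 ≤ c) (hτ : 0 ≤ τ)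
    (U : Set E₂) (hU : IsOpen U)
    (ψ : E₂ → E₁) (hψ : ∀ v ∈ U, ∀ w ∈ U, ‖ψ v - ψ w‖ ≤ c * ‖v - w‖)
    (T : E₂ ≃L[ℝ] E₂') (hT : β ≤ conorm (T : E₂ →L[ℝ] E₂'))
    (q : E₁ × E₂ → E₂') (hq : ContDiff ℝ 1 q)
    (hq₁ : ∀ p : E₁ × E₂,
      ‖(fderiv ℝ q p).comp (ContinuousLinearMap.inl ℝ E₁ E₂)‖ ≤ τ * α)
    (hq₂ : ∀ p : E₁ × E₂,
      ‖(fderiv ℝ q p).comp (ContinuousLinearMap.inr ℝ E₁ E₂)‖ ≤ τ * α)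
    (φ : E₂ → E₂') (hφ : ∀ v, φ v = T v + q (ψ v, v))
    (hpos : 0 < β - τ * α * (1 + c)) :
    (∀ v ∈ U, ∀ w ∈ U,
        (conorm (T : E₂ →L[ℝ] E₂') - τ * α * (1 + c)) * ‖v - w‖ ≤ ‖φ v - φ w‖) ∧
    Set.InjOn φ U ∧ ContinuousOn φ U ∧ IsOpen (φ '' U) ∧
    (∀ v ∈ U, ∀ w ∈ U, ‖v - w‖ ≤ (β - τ * α * (1 + c))⁻¹ * ‖φ v - φ w‖) := by
  set K := τ * α * (1 + c) with hK
  have hτα : 0 ≤ τ * α := mul_nonneg hτ hα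
  have hK0 : 0 ≤ K := by positivity
  have hqL : ∀ v ∈ U, ∀ w ∈ U, ‖q (ψ v, v) - q (ψ w, w)‖ ≤ K * ‖v - w‖ := by
    intro v hv w hw
    calc ‖q (ψ v, v) - q (ψ w, w)‖ ≤ τ * α * (‖ψ v - ψ w‖ + ‖v - w‖) :=
          norm_sub_le_of_partial_fderiv_le (hq.differentiable one_ne_zero) hq₁ hq₂ _ _ _ _
      _ ≤ τ * α * (c * ‖v - w‖ + ‖v - w‖) := by gcongr; exact hψ v hv w hw
      _ = K * ‖v - w‖ := by rw [hK]; ring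
  have hTL : ∀ v, conorm (T : E₂ →L[ℝ] E₂') * ‖v‖ ≤ ‖T v‖ := fun v =>
    conorm_mul_norm_le (T : E₂ →L[ℝ] E₂') v
  have main : ∀ v ∈ U, ∀ w ∈ U,
      (conorm (T : E₂ →L[ℝ] E₂') - K) * ‖v - w‖ ≤ ‖φ v - φ w‖ := by
    intro v hv w hw
    have e : φ v - φ w = T (v - w) + (q (ψ v, v) - q (ψ w, w)) := by
      rw [hφ, hφ, map_sub]; abel
    have h := norm_sub_le_norm_add (T (v - w)) (q (ψ v, v) - q (ψ w, w))
    rw [e]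
    linarith [hTL (v - w), hqL v hv w hw]
  have hinv : ∀ v ∈ U, ∀ w ∈ U, ‖v - w‖ ≤ (β - K)⁻¹ * ‖φ v - φ w‖ := by
    intro v hv w hw
    rw [inv_mul_eq_div, le_div_iff₀' hpos]
    exact (by gcongr : (β - K) * ‖v - w‖ ≤ (conorm (T : E₂ →L[ℝ] E₂') - K) * ‖v - w‖).trans
      (main v hv w hw)
  have happ : ApproximatesLinearOn φ (T : E₂ →L[ℝ] E₂') U ⟨K, hK0⟩ := by
    intro v hv w hw
    have e : φ v - φ w - (T : E₂ →L[ℝ] E₂') (v - w) = q (ψ v, v) - q (ψ w, w) := by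
      rw [hφ, hφ, ContinuousLinearEquiv.coe_coe, map_sub]; abel
    rw [e]
    exact hqL v hv w hw
  -- `T⁻¹` is recorded with the norm bound `β⁻¹ ≥ m(T)⁻¹`, so that the smallness condition for an
  -- open image reads `K < β`.
  let R : (T : E₂ →L[ℝ] E₂').NonlinearRightInverse :=
    { toFun := T.symm
      nnnorm := ⟨β⁻¹, by positivity⟩
      bound' := fun y => by
        change ‖T.symm y‖ ≤ β⁻¹ * ‖y‖
        rw [inv_mul_eq_div, le_div_iff₀' hβ]
        calc β * ‖T.symm y‖ ≤ conorm (T : E₂ →L[ℝ] E₂') * ‖T.symm y‖ := by gcongr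
          _ ≤ ‖T (T.symm y)‖ := hTL _
          _ = ‖y‖ := by rw [T.apply_symm_apply]
      right_inv' := fun y => T.apply_symm_apply y }
  have : CompleteSpace E₂ := FiniteDimensional.complete ℝ E₂
  refine ⟨main, ?_, happ.continuousOn, happ.open_image R hU (Or.inr ?_), hinv⟩
  · intro v hv w hw h
    have := hinv v hv w hw
    rw [h, sub_self, norm_zero, mul_zero] at this
    exact sub_eq_zero.mp (norm_le_zero_iff.mp this)
  · refine NNReal.coe_lt_coe.mp ?_
    change K < (β⁻¹)⁻¹
    rw [inv_inv]
    linarith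

end
end
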